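/- Let γ > 0 and let Z ∈ ℝ^{n1×n2} have singular value decomposition Z = Σ_{i=1}^{k} σ_i·u_i·v_iᵀ, where σ_i ≥ 0, the vectors u_1,…,u_k ∈ ℝ^{n1} are orthonormal, and v_1,…,v_k ∈ ℝ^{n2} are orthonormal. Then the matrix Σ_{i=1}^{k} max(σ_i − γ, 0)·u_i·v_iᵀ is a minimizer of the function X ↦ γ‖X‖_* + (1/2)‖X − Z‖_F² over ℝ^{n1×n2} (singular value soft-thresholding is the proximal operator of γ‖·‖_*). -/

import Mathlib

open Matrix
open scoped BigOperators

/-- Frobenius norm of a real matrix. -/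
noncomputable def frob {n1 n2 : ℕ} (A : Matrix (Fin n1) (Fin n2) ℝ) : ℝ :=
  Real.sqrt (∑ i, ∑ j, A i j ^ 2)

/-- Entrywise ℓ¹ norm. -/
noncomputable def l1norm {n1 n2 : ℕ} (A : Matrix (Fin n1) (Fin n2) ℝ) : ℝ :=
  ∑ i, ∑ j, |A i j|

/-- Trace inner product ⟨A,B⟩ = trace(AᵀB). -/
noncomputable def minner {n1 n2 : ℕ} (A B : Matrix (Fin n1) (Fin n2) ℝ) : ℝ :=
  ∑ i, ∑ j, A i j * B i j

/-- Spectral norm (largest singular value), as the ℓ²→ℓ² operator norm. -/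
noncomputable def spec {n1 n2 : ℕ} (A : Matrix (Fin n1) (Fin n2) ℝ) : ℝ :=
  sSup {c : ℝ | ∃ x : Fin n2 → ℝ, (∑ j, x j ^ 2) ≤ 1 ∧
    c = Real.sqrt (∑ i, (∑ j, A i j * x j) ^ 2)}

/-- Nuclear norm (sum of singular values), via duality with the spectral norm. -/
noncomputable def nuc {n1 n2 : ℕ} (A : Matrix (Fin n1) (Fin n2) ℝ) : ℝ :=
  sSup {c : ℝ | ∃ B : Matrix (Fin n1) (Fin n2) ℝ, spec B ≤ 1 ∧ c = minner A B}

/-- P_Ω: the matrix agreeing with `M` on `Ω` and zero off `Ω`. -/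
noncomputable def projS {n1 n2 : ℕ} (Ω : Finset (Fin n1 × Fin n2))
    (M : Matrix (Fin n1) (Fin n2) ℝ) : Matrix (Fin n1) (Fin n2) ℝ :=
  Matrix.of fun i j => if (i, j) ∈ Ω then M i j else 0

/-- Entrywise sign matrix. -/
noncomputable def signM {n1 n2 : ℕ} (A : Matrix (Fin n1) (Fin n2) ℝ) :
    Matrix (Fin n1) (Fin n2) ℝ :=
  Matrix.of fun i j => Real.sign (A i j)

/-- The tangent space T = {UQᵀ + RVᵀ}. -/
def memT {n1 n2 r : ℕ} (U : Matrix (Fin n1) (Fin r) ℝ) (V : Matrix (Fin n2) (Fin r) ℝ)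
    (M : Matrix (Fin n1) (Fin n2) ℝ) : Prop :=
  ∃ (Q : Matrix (Fin n2) (Fin r) ℝ) (R : Matrix (Fin n1) (Fin r) ℝ), M = U * Qᵀ + R * Vᵀ

/-- Membership in T⊥, the orthogonal complement of the tangent space. -/
def memTperp {n1 n2 r : ℕ} (U : Matrix (Fin n1) (Fin r) ℝ) (V : Matrix (Fin n2) (Fin r) ℝ)
    (W : Matrix (Fin n1) (Fin n2) ℝ) : Prop :=
  ∀ M, memT U V M → minner W M = 0

/-- (L̂, Ŝ) is a global minimizer of the √PCP objective
`‖L‖_* + λ‖S‖₁ + μ‖L + S − D‖_F`. -/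
def IsRootPCPMin {n1 n2 : ℕ} (D : Matrix (Fin n1) (Fin n2) ℝ) (lam mu : ℝ)
    (Lh Sh : Matrix (Fin n1) (Fin n2) ℝ) : Prop :=
  ∀ L S : Matrix (Fin n1) (Fin n2) ℝ,
    nuc Lh + lam * l1norm Sh + mu * frob (Lh + Sh - D) ≤
      nuc L + lam * l1norm S + mu * frob (L + S - D)

/-- (L̂, Ŝ) is a minimizer of StablePCP_c(δ):
minimize `‖L‖_* + λ‖S‖₁` subject to `‖L + S − D‖_F ≤ δ`. -/
def IsStablePCPMin {n1 n2 : ℕ} (D : Matrix (Fin n1) (Fin n2) ℝ) (lam δ : ℝ)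
    (Lh Sh : Matrix (Fin n1) (Fin n2) ℝ) : Prop :=
  frob (Lh + Sh - D) ≤ δ ∧
    ∀ L S : Matrix (Fin n1) (Fin n2) ℝ, frob (L + S - D) ≤ δ →
      nuc Lh + lam * l1norm Sh ≤ nuc L + lam * l1norm S

/-- Frobenius distance between pairs: ‖(L,S) − (L',S')‖_F. -/
noncomputable def pairDist {n1 n2 : ℕ} (L S L' S' : Matrix (Fin n1) (Fin n2) ℝ) : ℝ :=
  Real.sqrt (frob (L - L') ^ 2 + frob (S - S') ^ 2)

/-- Sample space of the random sparsity model: a uniformly random support of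
cardinality m together with iid uniform random signs. -/
abbrev SampleSpace (n1 n2 m : ℕ) : Type :=
  {Ω : Finset (Fin n1 × Fin n2) // Ω.card = m} × ((Fin n1 × Fin n2) → Bool)

/-- The sparse matrix S0 built from fixed magnitudes `a` and a random sample:
S0 vanishes off Ω and equals ±a on Ω according to the random signs. -/
noncomputable def sparseOf {n1 n2 m : ℕ} (a : Fin n1 × Fin n2 → ℝ) (ω : SampleSpace n1 n2 m) :
    Matrix (Fin n1) (Fin n2) ℝ :=
  Matrix.of fun i j =>
    if (i, j) ∈ ω.1.1 then (if ω.2 (i, j) then a (i, j) else -a (i, j)) else 0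

open Classical in
/-- Uniform probability of an event on a finite sample space. -/
noncomputable def unifProb {α : Type*} [Fintype α] (E : α → Prop) : ℝ :=
  ((Finset.univ.filter fun a => E a).card : ℝ) / (Fintype.card α : ℝ)

theorem bddAbove_spec_set {n1 n2 : ℕ} (A : Matrix (Fin n1) (Fin n2) ℝ) :
    BddAbove {c : ℝ | ∃ x : Fin n2 → ℝ, (∑ j, x j ^ 2) ≤ 1 ∧
      c = Real.sqrt (∑ i, (∑ j, A i j * x j) ^ 2)} := by
  refine ⟨frob A, ?_⟩
  rintro c ⟨x, hx, rfl⟩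
  refine Real.sqrt_le_sqrt (Finset.sum_le_sum fun i _ => ?_)
  refine (Finset.sum_mul_sq_le_sq_mul_sq Finset.univ (A i) x).trans ?_
  exact mul_le_of_le_one_right (Finset.sum_nonneg fun j _ => sq_nonneg _) hx

/-- A matrix of spectral norm at most one maps the unit ball to the unit ball. -/
theorem sum_sq_mul_le_one_of_spec_le_one {n1 n2 : ℕ} {B : Matrix (Fin n1) (Fin n2) ℝ}
    (hB : spec B ≤ 1) {x : Fin n2 → ℝ} (hx : (∑ j, x j ^ 2) ≤ 1) :
    ∑ i, (∑ j, B i j * x j) ^ 2 ≤ 1 := by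
  have h := (le_csSup (bddAbove_spec_set B) ⟨x, hx, rfl⟩).trans hB
  simpa using (Real.sqrt_le_iff.mp h).2

theorem bilin_le_one_of_spec_le_one {n1 n2 : ℕ} {B : Matrix (Fin n1) (Fin n2) ℝ}
    (hB : spec B ≤ 1) {y : Fin n1 → ℝ} {x : Fin n2 → ℝ}
    (hy : (∑ i, y i ^ 2) ≤ 1) (hx : (∑ j, x j ^ 2) ≤ 1) :
    ∑ i, y i * ∑ j, B i j * x j ≤ 1 := by
  have h := Finset.sum_mul_sq_le_sq_mul_sq Finset.univ y fun i => ∑ j, B i j * x j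
  have h1 := sum_sq_mul_le_one_of_spec_le_one hB hx
  have h2 : (∑ i, y i * ∑ j, B i j * x j) ^ 2 ≤ 1 :=
    h.trans (mul_le_one₀ hy (Finset.sum_nonneg fun i _ => sq_nonneg _) h1)
  exact (abs_le.mp ((sq_le_one_iff_abs_le_one _).mp h2)).2

theorem abs_entry_le_one_of_spec_le_one {n1 n2 : ℕ} {B : Matrix (Fin n1) (Fin n2) ℝ}
    (hB : spec B ≤ 1) (i : Fin n1) (j : Fin n2) : |B i j| ≤ 1 := by
  have h := sum_sq_mul_le_one_of_spec_le_one hB (x := Pi.single j 1)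
    (by simp [Pi.single_apply])
  simp only [Pi.single_apply, mul_ite, mul_one, mul_zero, Finset.sum_ite_eq',
    Finset.mem_univ, if_true] at h
  refine (sq_le_one_iff_abs_le_one _).mp (le_trans ?_ h)
  exact Finset.single_le_sum (f := fun i => B i j ^ 2) (fun i _ => sq_nonneg _)
    (Finset.mem_univ i)

theorem minner_le_nuc {n1 n2 : ℕ} (A : Matrix (Fin n1) (Fin n2) ℝ)
    {B : Matrix (Fin n1) (Fin n2) ℝ} (hB : spec B ≤ 1) : minner A B ≤ nuc A := by
  refine le_csSup ⟨l1norm A, ?_⟩ ⟨B, hB, rfl⟩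
  rintro c ⟨C, hC, rfl⟩
  refine Finset.sum_le_sum fun i _ => Finset.sum_le_sum fun j _ => ?_
  refine (le_abs_self _).trans ?_
  rw [abs_mul]
  exact mul_le_of_le_one_right (abs_nonneg _) (abs_entry_le_one_of_spec_le_one hC i j)

/-- Pairing a sum of rank-one matrices with `M`. -/
theorem minner_sum_rankOne {n1 n2 k : ℕ} (s : Fin k → ℝ) (u : Fin k → Fin n1 → ℝ)
    (v : Fin k → Fin n2 → ℝ) (M : Matrix (Fin n1) (Fin n2) ℝ) :
    minner (Matrix.of fun p q => ∑ i, s i * (u i p * v i q)) M =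
      ∑ i, s i * ∑ p, u i p * ∑ q, M p q * v i q := by
  simp only [minner, Matrix.of_apply, Finset.sum_mul, Finset.mul_sum]
  rw [Finset.sum_congr rfl fun p _ => Finset.sum_comm, Finset.sum_comm]
  exact Finset.sum_congr rfl fun i _ => Finset.sum_congr rfl fun p _ =>
    Finset.sum_congr rfl fun q _ => by ring

theorem nuc_sum_rankOne_le {n1 n2 k : ℕ} {s : Fin k → ℝ} (hs : ∀ i, 0 ≤ s i)
    {u : Fin k → Fin n1 → ℝ} {v : Fin k → Fin n2 → ℝ}
    (hu : ∀ i, (∑ l, u i l ^ 2) ≤ 1) (hv : ∀ i, (∑ l, v i l ^ 2) ≤ 1) :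
    nuc (Matrix.of fun p q => ∑ i, s i * (u i p * v i q)) ≤ ∑ i, s i := by
  refine Real.sSup_le ?_ (Finset.sum_nonneg fun i _ => hs i)
  rintro c ⟨B, hB, rfl⟩
  rw [minner_sum_rankOne]
  exact Finset.sum_le_sum fun i _ =>
    mul_le_of_le_one_right (hs i) (bilin_le_one_of_spec_le_one hB (hu i) (hv i))

/-- Coordinates of a combination of orthonormal vectors. -/
theorem sum_mul_combination {n k : ℕ} {u : Fin k → Fin n → ℝ}
    (hu : ∀ i j : Fin k, (∑ l, u i l * u j l) = if i = j then 1 else 0)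
    (a : Fin k → ℝ) (i : Fin k) : ∑ p, u i p * ∑ j, a j * u j p = a i := by
  have h : ∀ j, ∑ p, u i p * (a j * u j p) = a j * if i = j then 1 else 0 := fun j => by
    rw [← hu, Finset.mul_sum]
    exact Finset.sum_congr rfl fun p _ => by ring
  simp only [Finset.mul_sum]
  rw [Finset.sum_comm]
  simp [h]

/-- Pythagoras for a combination of orthonormal vectors. -/
theorem sum_sq_combination {n k : ℕ} {u : Fin k → Fin n → ℝ}
    (hu : ∀ i j : Fin k, (∑ l, u i l * u j l) = if i = j then 1 else 0)
    (a : Fin k → ℝ) : ∑ p, (∑ i, a i * u i p) ^ 2 = ∑ i, a i ^ 2 := by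
  have h : ∀ p, (∑ i, a i * u i p) ^ 2 = ∑ i, a i * (u i p * ∑ j, a j * u j p) := fun p => by
    rw [sq, Finset.sum_mul]
    exact Finset.sum_congr rfl fun i _ => by ring
  simp only [h]
  rw [Finset.sum_comm]
  simp only [← Finset.mul_sum, sum_mul_combination hu, sq]

/-- Bessel's inequality. -/
theorem sum_sq_coeff_le {n k : ℕ} {v : Fin k → Fin n → ℝ}
    (hv : ∀ i j : Fin k, (∑ l, v i l * v j l) = if i = j then 1 else 0)
    (x : Fin n → ℝ) : ∑ i, (∑ q, v i q * x q) ^ 2 ≤ ∑ q, x q ^ 2 := by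
  set a : Fin k → ℝ := fun i => ∑ q, v i q * x q with ha
  have hcross : ∑ q, x q * ∑ i, a i * v i q = ∑ i, a i ^ 2 := by
    simp only [Finset.mul_sum]
    rw [Finset.sum_comm]
    refine Finset.sum_congr rfl fun i _ => ?_
    rw [sq]
    nth_rewrite 3 [ha]
    rw [Finset.mul_sum]
    exact Finset.sum_congr rfl fun q _ => by ring
  have hsq : 0 ≤ ∑ q, (x q - ∑ i, a i * v i q) ^ 2 := Finset.sum_nonneg fun q _ => sq_nonneg _
  have hexp : ∑ q, (x q - ∑ i, a i * v i q) ^ 2 =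
      ∑ q, x q ^ 2 - 2 * (∑ q, x q * ∑ i, a i * v i q) + ∑ q, (∑ i, a i * v i q) ^ 2 := by
    rw [Finset.mul_sum, ← Finset.sum_sub_distrib, ← Finset.sum_add_distrib]
    exact Finset.sum_congr rfl fun q _ => by ring
  rw [hexp, hcross, sum_sq_combination hv] at hsq
  linarith

theorem spec_sum_rankOne_le_one {n1 n2 k : ℕ} {b : Fin k → ℝ} (hb : ∀ i, |b i| ≤ 1)
    {u : Fin k → Fin n1 → ℝ} {v : Fin k → Fin n2 → ℝ}
    (hu : ∀ i j : Fin k, (∑ l, u i l * u j l) = if i = j then 1 else 0)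
    (hv : ∀ i j : Fin k, (∑ l, v i l * v j l) = if i = j then 1 else 0) :
    spec (Matrix.of fun p q => ∑ i, b i * (u i p * v i q)) ≤ 1 := by
  refine Real.sSup_le ?_ zero_le_one
  rintro c ⟨x, hx, rfl⟩
  refine Real.sqrt_le_iff.mpr ⟨zero_le_one, ?_⟩
  rw [one_pow]
  have h : ∀ p, ∑ q, (∑ i, b i * (u i p * v i q)) * x q =
      ∑ i, (b i * ∑ q, v i q * x q) * u i p := fun p => by
    simp only [Finset.sum_mul, Finset.mul_sum]
    rw [Finset.sum_comm]
    exact Finset.sum_congr rfl fun i _ => Finset.sum_congr rfl fun q _ => by ring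
  simp only [Matrix.of_apply, h]
  rw [sum_sq_combination hu]
  refine (Finset.sum_le_sum fun i _ => ?_).trans ((sum_sq_coeff_le hv x).trans hx)
  rw [mul_pow]
  exact mul_le_of_le_one_left (sq_nonneg _) ((sq_le_one_iff_abs_le_one _).mpr (hb i))

theorem minner_sum_rankOne_sum_rankOne {n1 n2 k : ℕ} (s b : Fin k → ℝ)
    {u : Fin k → Fin n1 → ℝ} {v : Fin k → Fin n2 → ℝ}
    (hu : ∀ i j : Fin k, (∑ l, u i l * u j l) = if i = j then 1 else 0)
    (hv : ∀ i j : Fin k, (∑ l, v i l * v j l) = if i = j then 1 else 0) :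
    minner (Matrix.of fun p q => ∑ i, s i * (u i p * v i q))
      (Matrix.of fun p q => ∑ i, b i * (u i p * v i q)) = ∑ i, s i * b i := by
  rw [minner_sum_rankOne]
  refine Finset.sum_congr rfl fun i _ => ?_
  have h : ∀ p, ∑ q, (∑ j, b j * (u j p * v j q)) * v i q = b i * u i p := fun p => by
    rw [← sum_mul_combination hv (fun j => b j * u j p) i]
    exact Finset.sum_congr rfl fun q _ => by
      rw [mul_comm]
      exact congrArg _ (Finset.sum_congr rfl fun j _ => by ring)
  have hnorm : ∑ p, u i p * (b i * u i p) = b i := by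
    have h1 := hu i i
    rw [if_pos rfl] at h1
    calc ∑ p, u i p * (b i * u i p) = b i * ∑ p, u i p * u i p := by
          rw [Finset.mul_sum]
          exact Finset.sum_congr rfl fun p _ => by ring
      _ = b i := by rw [h1, mul_one]
  simp only [Matrix.of_apply, h, hnorm]

theorem frob_sq {n1 n2 : ℕ} (A : Matrix (Fin n1) (Fin n2) ℝ) :
    frob A ^ 2 = ∑ i, ∑ j, A i j ^ 2 :=
  Real.sq_sqrt (Finset.sum_nonneg fun _ _ => Finset.sum_nonneg fun _ _ => sq_nonneg _)

/-- If `B` is a subgradient of the nuclear norm at `Y` and `Z = Y + γ B`, then `Y` minimizes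
`X ↦ γ‖X‖_* + ½‖X − Z‖_F²`. -/
theorem prox_le_of_subgradient {n1 n2 : ℕ} {γ : ℝ} (hγ : 0 ≤ γ)
    {Y Z B : Matrix (Fin n1) (Fin n2) ℝ} (hB : spec B ≤ 1) (hY : nuc Y ≤ minner Y B)
    (hZ : Z = Y + γ • B) (X : Matrix (Fin n1) (Fin n2) ℝ) :
    γ * nuc Y + (1 / 2) * frob (Y - Z) ^ 2 ≤ γ * nuc X + (1 / 2) * frob (X - Z) ^ 2 := by
  have hfrob : (1 / 2) * frob (X - Z) ^ 2 =
      (1 / 2) * frob (Y - Z) ^ 2 + (1 / 2) * frob (X - Y) ^ 2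
        - (γ * minner X B - γ * minner Y B) := by
    simp only [frob_sq, minner, Finset.mul_sum, ← Finset.sum_add_distrib,
      ← Finset.sum_sub_distrib]
    refine Finset.sum_congr rfl fun i _ => Finset.sum_congr rfl fun j _ => ?_
    simp only [hZ, Matrix.sub_apply, Matrix.add_apply, Matrix.smul_apply, smul_eq_mul]
    ring
  have h1 := mul_le_mul_of_nonneg_left hY hγ
  have h2 := mul_le_mul_of_nonneg_left (minner_le_nuc X hB) hγ
  linarith [sq_nonneg (frob (X - Y))]

/-- singular value soft-thresholding is the proximal operator of γ‖·‖_*: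
if Z = Σ σᵢ·uᵢ·vᵢᵀ is an SVD, then Σ max(σᵢ − γ, 0)·uᵢ·vᵢᵀ minimizes
X ↦ γ‖X‖_* + ½‖X − Z‖_F². -/
theorem prox_nuclear_norm {n1 n2 k : ℕ} (γ : ℝ) (hγ : 0 < γ)
    (σ : Fin k → ℝ) (hσ : ∀ i, 0 ≤ σ i)
    (u : Fin k → Fin n1 → ℝ) (v : Fin k → Fin n2 → ℝ)
    (hu : ∀ i j : Fin k, (∑ l, u i l * u j l) = if i = j then 1 else 0)
    (hv : ∀ i j : Fin k, (∑ l, v i l * v j l) = if i = j then 1 else 0)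
    (Z Xstar : Matrix (Fin n1) (Fin n2) ℝ)
    (hZ : Z = Matrix.of fun p q => ∑ i, σ i * (u i p * v i q))
    (hXstar : Xstar = Matrix.of fun p q => ∑ i, max (σ i - γ) 0 * (u i p * v i q)) :
    ∀ X : Matrix (Fin n1) (Fin n2) ℝ,
      γ * nuc Xstar + (1 / 2) * frob (Xstar - Z) ^ 2 ≤
        γ * nuc X + (1 / 2) * frob (X - Z) ^ 2 := by
  intro X
  have hb : ∀ i, |min (σ i / γ) 1| ≤ 1 := fun i => by
    rw [abs_of_nonneg (le_min (div_nonneg (hσ i) hγ.le) zero_le_one)]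
    exact min_le_right _ _
  have hsplit : ∀ i, σ i = max (σ i - γ) 0 + γ * min (σ i / γ) 1 := fun i => by
    rw [mul_min_of_nonneg _ _ hγ.le, mul_div_cancel₀ _ hγ.ne', mul_one]
    rcases le_total (σ i) γ with h | h
    · rw [max_eq_right (by linarith), min_eq_left h, zero_add]
    · rw [max_eq_left (by linarith), min_eq_right h, sub_add_cancel]
  have hcomp : ∀ i, max (σ i - γ) 0 * min (σ i / γ) 1 = max (σ i - γ) 0 := fun i => by
    rcases le_total (σ i) γ with h | h
    · rw [max_eq_right (by linarith), zero_mul]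
    · rw [min_eq_right ((one_le_div hγ).mpr h), mul_one]
  refine prox_le_of_subgradient hγ.le (spec_sum_rankOne_le_one hb hu hv) ?_ ?_ X
  · rw [hXstar, minner_sum_rankOne_sum_rankOne _ _ hu hv]
    simp only [hcomp]
    exact nuc_sum_rankOne_le (fun i => le_max_right _ _)
      (fun i => by simp [sq, hu]) (fun i => by simp [sq, hv])
  · rw [hZ, hXstar]
    ext p q
    simp only [Matrix.of_apply, Matrix.add_apply, Matrix.smul_apply, smul_eq_mul, Finset.mul_sum,
      ← Finset.sum_add_distrib]
    refine Finset.sum_congr rfl fun i _ => ?_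
    nth_rewrite 1 [hsplit i]
    ring
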